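/- Fix j₀, m₀ ∈ ℂ. Let W be the ℂ-vector space of finitely supported functions on ℤ×ℤ, with basis vectors v_{j,m} indexed by j = j₀ + k/2 and m = m₀ + k/2 + l for (k,l) ∈ ℤ². With √ the principal complex square root, define ℂ-linear operators on W byature T₋ v_{j,m} = −√(j+m)·v_{j−½,m−½}, T₊ v_{j,m} = √(j−m)·v_{j−½,m+½}, T̃₋ v_{j,m} = √(j−m+1)·v_{j+½,m−½}, T̃₊ v_{j,m} = √(j+m+1)·v_{j+½,m+½}. Then: (i) [T₊,T̃₋] = [T̃₊,T₋] = id, and all other commutators among T₊,T₋,T̃₊,T̃₋ vanish; (ii) setting J₊ := i·T₊T̃₊, J₋ := −i·T₋T̃₋ and J₀ := −½(T₋T̃₊ + T₊T̃₋), one has J₀ v_{j,m} = m·v_{j,m} and J_± v_{j,m} = i·√(j∓m)·√(j±m+1)·v_{j,m±1}; consequently [J₀,J_±] = ±J_± and [J₊,J₋] = −2J₀. Thus the Jordan–Schwinger construction realizes the 𝔰𝔭𝔦𝔫(2,1) generators for arbitrary weight lattices, including those of the continuous series (j₀ ∈ ℂ arbitrary). -/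

import Mathlib

noncomputable section

/-- The principal complex square root, `√z = z^{1/2}` (so `(√z)² = z` for all `z ∈ ℂ`). -/
def csqrt (z : ℂ) : ℂ := z ^ (1 / 2 : ℂ)

/-- The linear operator on finitely supported functions `(ℤ×ℤ) →₀ ℂ` sending the basis
vector at `kl` to `f kl` times the basis vector at `g kl`. -/
def opOf (f : ℤ × ℤ → ℂ) (g : ℤ × ℤ → ℤ × ℤ) :
    ((ℤ × ℤ) →₀ ℂ) →ₗ[ℂ] ((ℤ × ℤ) →₀ ℂ) :=
  Finsupp.lsum ℂ fun kl => f kl • Finsupp.lsingle (g kl)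

/-- `j = j₀ + k/2`. -/
def jf (j₀ : ℂ) (k : ℤ) : ℂ := j₀ + (k : ℂ) / 2

/-- `m = m₀ + k/2 + l`. -/
def mf (m₀ : ℂ) (kl : ℤ × ℤ) : ℂ := m₀ + (kl.1 : ℂ) / 2 + (kl.2 : ℂ)

/-- `T₋ v_{j,m} = -√(j+m) v_{j-½,m-½}`. -/
def Tm (j₀ m₀ : ℂ) : ((ℤ × ℤ) →₀ ℂ) →ₗ[ℂ] ((ℤ × ℤ) →₀ ℂ) :=
  opOf (fun kl => -csqrt (jf j₀ kl.1 + mf m₀ kl)) (fun kl => (kl.1 - 1, kl.2))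

/-- `T₊ v_{j,m} = √(j-m) v_{j-½,m+½}`. -/
def Tp (j₀ m₀ : ℂ) : ((ℤ × ℤ) →₀ ℂ) →ₗ[ℂ] ((ℤ × ℤ) →₀ ℂ) :=
  opOf (fun kl => csqrt (jf j₀ kl.1 - mf m₀ kl)) (fun kl => (kl.1 - 1, kl.2 + 1))

/-- `T̃₋ v_{j,m} = √(j-m+1) v_{j+½,m-½}`. -/
def Ttm (j₀ m₀ : ℂ) : ((ℤ × ℤ) →₀ ℂ) →ₗ[ℂ] ((ℤ × ℤ) →₀ ℂ) :=
  opOf (fun kl => csqrt (jf j₀ kl.1 - mf m₀ kl + 1)) (fun kl => (kl.1 + 1, kl.2 - 1))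

/-- `T̃₊ v_{j,m} = √(j+m+1) v_{j+½,m+½}`. -/
def Ttp (j₀ m₀ : ℂ) : ((ℤ × ℤ) →₀ ℂ) →ₗ[ℂ] ((ℤ × ℤ) →₀ ℂ) :=
  opOf (fun kl => csqrt (jf j₀ kl.1 + mf m₀ kl + 1)) (fun kl => (kl.1 + 1, kl.2))

/-- `J₊ = i T₊T̃₊`. -/
def Jp (j₀ m₀ : ℂ) : ((ℤ × ℤ) →₀ ℂ) →ₗ[ℂ] ((ℤ × ℤ) →₀ ℂ) :=
  Complex.I • (Tp j₀ m₀ ∘ₗ Ttp j₀ m₀)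

/-- `J₋ = -i T₋T̃₋`. -/
def Jm (j₀ m₀ : ℂ) : ((ℤ × ℤ) →₀ ℂ) →ₗ[ℂ] ((ℤ × ℤ) →₀ ℂ) :=
  (-Complex.I) • (Tm j₀ m₀ ∘ₗ Ttm j₀ m₀)

/-- `J₀ = -½(T₋T̃₊ + T₊T̃₋)`. -/
def J0 (j₀ m₀ : ℂ) : ((ℤ × ℤ) →₀ ℂ) →ₗ[ℂ] ((ℤ × ℤ) →₀ ℂ) :=
  (-(1 / 2 : ℂ)) • (Tm j₀ m₀ ∘ₗ Ttp j₀ m₀ + Tp j₀ m₀ ∘ₗ Ttm j₀ m₀)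

theorem csqrt_mul_self (z : ℂ) : csqrt z * csqrt z = z := by
  rw [csqrt, ← sq, one_div]
  exact_mod_cast Complex.cpow_nat_inv_pow z two_ne_zero

theorem opOf_single (f : ℤ × ℤ → ℂ) (g : ℤ × ℤ → ℤ × ℤ) (kl : ℤ × ℤ) (c : ℂ) :
    opOf f g (Finsupp.single kl c) = Finsupp.single (g kl) (f kl * c) := by
  simp [opOf]

theorem jf_add_mf (j₀ m₀ : ℂ) (k l : ℤ) : jf j₀ k + mf m₀ (k, l) = j₀ + m₀ + k + l := by
  simp only [jf, mf]; ring

theorem jf_sub_mf (j₀ m₀ : ℂ) (k l : ℤ) : jf j₀ k - mf m₀ (k, l) = j₀ - m₀ - l := by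
  simp only [jf, mf]; ring

theorem Tm_single (j₀ m₀ : ℂ) (k l : ℤ) (c : ℂ) :
    Tm j₀ m₀ (Finsupp.single (k, l) c) =
      Finsupp.single (k - 1, l) (-csqrt (j₀ + m₀ + k + l) * c) := by
  rw [Tm, opOf_single, jf_add_mf]

theorem Tp_single (j₀ m₀ : ℂ) (k l : ℤ) (c : ℂ) :
    Tp j₀ m₀ (Finsupp.single (k, l) c) =
      Finsupp.single (k - 1, l + 1) (csqrt (j₀ - m₀ - l) * c) := by
  rw [Tp, opOf_single, jf_sub_mf]

theorem Ttm_single (j₀ m₀ : ℂ) (k l : ℤ) (c : ℂ) :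
    Ttm j₀ m₀ (Finsupp.single (k, l) c) =
      Finsupp.single (k + 1, l - 1) (csqrt (j₀ - m₀ - l + 1) * c) := by
  rw [Ttm, opOf_single, jf_sub_mf]

theorem Ttp_single (j₀ m₀ : ℂ) (k l : ℤ) (c : ℂ) :
    Ttp j₀ m₀ (Finsupp.single (k, l) c) =
      Finsupp.single (k + 1, l) (csqrt (j₀ + m₀ + k + l + 1) * c) := by
  rw [Ttp, opOf_single, jf_add_mf]

theorem J0_single (j₀ m₀ : ℂ) (k l : ℤ) (c : ℂ) :
    J0 j₀ m₀ (Finsupp.single (k, l) c) = Finsupp.single (k, l) (mf m₀ (k, l) * c) := by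
  have ha : j₀ + m₀ + ((k + 1 : ℤ) : ℂ) + l = j₀ + m₀ + k + l + 1 := by push_cast; ring
  have hb : j₀ - m₀ - ((l - 1 : ℤ) : ℂ) = j₀ - m₀ - l + 1 := by push_cast; ring
  simp only [J0, LinearMap.smul_apply, LinearMap.add_apply, LinearMap.comp_apply, Tm_single,
    Tp_single, Ttm_single, Ttp_single, ha, hb, add_sub_cancel_right, sub_add_cancel,
    ← Finsupp.single_add, Finsupp.smul_single, smul_eq_mul]
  congr 1
  simp only [mf]
  linear_combination (c / 2) * csqrt_mul_self (j₀ + m₀ + k + l + 1) -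
    (c / 2) * csqrt_mul_self (j₀ - m₀ - l + 1)

theorem Jp_single (j₀ m₀ : ℂ) (k l : ℤ) (c : ℂ) :
    Jp j₀ m₀ (Finsupp.single (k, l) c) = Finsupp.single (k, l + 1)
      (Complex.I * csqrt (j₀ - m₀ - l) * csqrt (j₀ + m₀ + k + l + 1) * c) := by
  simp only [Jp, LinearMap.smul_apply, LinearMap.comp_apply, Tp_single, Ttp_single,
    add_sub_cancel_right, Finsupp.smul_single, smul_eq_mul, mul_assoc]

theorem Jm_single (j₀ m₀ : ℂ) (k l : ℤ) (c : ℂ) :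
    Jm j₀ m₀ (Finsupp.single (k, l) c) = Finsupp.single (k, l - 1)
      (Complex.I * csqrt (j₀ + m₀ + k + l) * csqrt (j₀ - m₀ - l + 1) * c) := by
  have ha : j₀ + m₀ + ((k + 1 : ℤ) : ℂ) + ((l - 1 : ℤ) : ℂ) = j₀ + m₀ + k + l := by
    push_cast; ring
  simp only [Jm, LinearMap.smul_apply, LinearMap.comp_apply, Tm_single, Ttm_single, ha,
    add_sub_cancel_right, Finsupp.smul_single, smul_eq_mul]
  congr 1
  ring

/-- Linear maps on `(ℤ × ℤ) →₀ ℂ` agree as soon as they agree on all basis vectors. -/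
theorem linearMap_ext_single {S T : ((ℤ × ℤ) →₀ ℂ) →ₗ[ℂ] ((ℤ × ℤ) →₀ ℂ)}
    (h : ∀ k l : ℤ, S (Finsupp.single (k, l) 1) = T (Finsupp.single (k, l) 1)) : S = T :=
  Finsupp.lhom_ext' fun kl => LinearMap.ext_ring (h kl.1 kl.2)

/-- The Jordan–Schwinger construction for `𝔰𝔭𝔦𝔫(2,1)`: the spinor operators
`T₊, T₋, T̃₊, T̃₋` satisfy Heisenberg commutation relations, and the bilinears
`J₀, J₊, J₋` act as the `𝔰𝔭𝔦𝔫(2,1)` generators on the weight lattice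
`{(j₀+k/2, m₀+k/2+l) : (k,l) ∈ ℤ²}`, for arbitrary `j₀, m₀ ∈ ℂ`. -/
theorem jordan_schwinger_spin21 (j₀ m₀ : ℂ) :
    (Tp j₀ m₀ ∘ₗ Ttm j₀ m₀ - Ttm j₀ m₀ ∘ₗ Tp j₀ m₀ = LinearMap.id) ∧
    (Ttp j₀ m₀ ∘ₗ Tm j₀ m₀ - Tm j₀ m₀ ∘ₗ Ttp j₀ m₀ = LinearMap.id) ∧
    (Tp j₀ m₀ ∘ₗ Tm j₀ m₀ - Tm j₀ m₀ ∘ₗ Tp j₀ m₀ = 0) ∧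
    (Ttp j₀ m₀ ∘ₗ Ttm j₀ m₀ - Ttm j₀ m₀ ∘ₗ Ttp j₀ m₀ = 0) ∧
    (Tp j₀ m₀ ∘ₗ Ttp j₀ m₀ - Ttp j₀ m₀ ∘ₗ Tp j₀ m₀ = 0) ∧
    (Tm j₀ m₀ ∘ₗ Ttm j₀ m₀ - Ttm j₀ m₀ ∘ₗ Tm j₀ m₀ = 0) ∧
    (∀ k l : ℤ, J0 j₀ m₀ (Finsupp.single (k, l) 1) =
      mf m₀ (k, l) • Finsupp.single (k, l) 1) ∧
    (∀ k l : ℤ, Jp j₀ m₀ (Finsupp.single (k, l) 1) =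
      (Complex.I * csqrt (jf j₀ k - mf m₀ (k, l)) * csqrt (jf j₀ k + mf m₀ (k, l) + 1)) •
        Finsupp.single (k, l + 1) 1) ∧
    (∀ k l : ℤ, Jm j₀ m₀ (Finsupp.single (k, l) 1) =
      (Complex.I * csqrt (jf j₀ k + mf m₀ (k, l)) * csqrt (jf j₀ k - mf m₀ (k, l) + 1)) •
        Finsupp.single (k, l - 1) 1) ∧
    (J0 j₀ m₀ ∘ₗ Jp j₀ m₀ - Jp j₀ m₀ ∘ₗ J0 j₀ m₀ = Jp j₀ m₀) ∧
    (J0 j₀ m₀ ∘ₗ Jm j₀ m₀ - Jm j₀ m₀ ∘ₗ J0 j₀ m₀ = -Jm j₀ m₀) ∧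
    (Jp j₀ m₀ ∘ₗ Jm j₀ m₀ - Jm j₀ m₀ ∘ₗ Jp j₀ m₀ = (-2 : ℂ) • J0 j₀ m₀) := by
  have hcast : ∀ k l : ℤ, j₀ + m₀ + ((k - 1 : ℤ) : ℂ) + ((l + 1 : ℤ) : ℂ) = j₀ + m₀ + k + l := by
    intro k l; push_cast; ring
  have hcast' : ∀ k l : ℤ, j₀ + m₀ + ((k + 1 : ℤ) : ℂ) + ((l - 1 : ℤ) : ℂ) = j₀ + m₀ + k + l := by
    intro k l; push_cast; ring
  have hk : ∀ k l : ℤ, j₀ + m₀ + ((k + 1 : ℤ) : ℂ) + l = j₀ + m₀ + k + l + 1 := by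
    intro k l; push_cast; ring
  have hk' : ∀ k l : ℤ, j₀ + m₀ + ((k - 1 : ℤ) : ℂ) + l + 1 = j₀ + m₀ + k + l := by
    intro k l; push_cast; ring
  have hl : ∀ l : ℤ, j₀ - m₀ - ((l - 1 : ℤ) : ℂ) = j₀ - m₀ - l + 1 := by
    intro l; push_cast; ring
  have hl' : ∀ l : ℤ, j₀ - m₀ - ((l + 1 : ℤ) : ℂ) + 1 = j₀ - m₀ - l := by
    intro l; push_cast; ring
  have hkl : ∀ k l : ℤ, j₀ + m₀ + (k : ℂ) + ((l + 1 : ℤ) : ℂ) = j₀ + m₀ + k + l + 1 := by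
    intro k l; push_cast; ring
  have hkl' : ∀ k l : ℤ, j₀ + m₀ + (k : ℂ) + ((l - 1 : ℤ) : ℂ) + 1 = j₀ + m₀ + k + l := by
    intro k l; push_cast; ring
  refine ⟨?_, ?_, ?_, ?_, ?_, ?_, ?_, ?_, ?_, ?_, ?_, ?_⟩
  case refine_7 => intro k l; rw [J0_single, Finsupp.smul_single, smul_eq_mul]
  case refine_8 =>
    intro k l
    rw [Jp_single, jf_sub_mf, jf_add_mf, Finsupp.smul_single, smul_eq_mul]
  case refine_9 =>
    intro k l
    rw [Jm_single, jf_sub_mf, jf_add_mf, Finsupp.smul_single, smul_eq_mul]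
  all_goals
    refine linearMap_ext_single fun k l => ?_
    simp only [LinearMap.sub_apply, LinearMap.comp_apply, LinearMap.neg_apply,
      LinearMap.smul_apply, LinearMap.id_apply, LinearMap.zero_apply, Tm_single, Tp_single,
      Ttm_single, Ttp_single, J0_single, Jp_single, Jm_single, hcast, hcast', hk, hk', hl, hl',
      hkl, hkl', add_sub_cancel_right, sub_add_cancel, Finsupp.smul_single, smul_eq_mul,
      ← Finsupp.single_neg, ← Finsupp.single_sub, Finsupp.single_eq_zero]
  · congr 1
    linear_combination csqrt_mul_self (j₀ - m₀ - l + 1) - csqrt_mul_self (j₀ - m₀ - l)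
  · congr 1
    linear_combination csqrt_mul_self (j₀ + m₀ + k + l + 1) - csqrt_mul_self (j₀ + m₀ + k + l)
  · ring
  · ring
  · ring
  · ring
  · congr 1
    simp only [mf]; push_cast; ring
  · congr 1
    simp only [mf]; push_cast; ring
  · congr 1
    simp only [mf]
    have ha := csqrt_mul_self (j₀ + m₀ + k + l)
    have ha' := csqrt_mul_self (j₀ + m₀ + k + l + 1)
    have hb := csqrt_mul_self (j₀ - m₀ - l)
    have hb' := csqrt_mul_self (j₀ - m₀ - l + 1)
    set a := csqrt (j₀ + m₀ + k + l)
    set a' := csqrt (j₀ + m₀ + k + l + 1)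
    set b := csqrt (j₀ - m₀ - l)
    set b' := csqrt (j₀ - m₀ - l + 1)
    linear_combination (a * a * (b' * b') - a' * a' * (b * b)) * Complex.I_mul_I -
      b' * b' * ha - (j₀ + m₀ + k + l) * hb' + b * b * ha' + (j₀ + m₀ + k + l + 1) * hb

end
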